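/- arXiv:1407.2438 — 3 statements merged into one kernel-verified Lean document; each statement's English description precedes it below -/
import Mathlib

section
/- Let N ≥ 3, γ > 0, κ > 0, g₁ > 0, g₂ > 0, g > −√(g₁g₂), and let X₀ ≥ 0, Y₀, S₀₀ ≥ 0, E₀ be real numbers playing the roles of X(0), Y(0), S₀(0), E(0). Set β = c₃γ/c₂, C₀ = |Y₀|/(2γ) + 4κS₀₀/γ², M̃(t) = 1 + X₀ + C₀(e^{2γt} − 1), T₀ₘₐₓ = (1/β)ln(1 + β²/((1+X₀)(β² + c₁))), and T₀ₘᵢₙ = (1/β)ln(1 + β²/(M̃(T₀ₘₐₓ)(β² + c₁))). If E₀ < −(N+2)M̃(T₀ₘₐₓ)/(8N·T₀ₘᵢₙ²), then there exists T₀ ∈ [T₀ₘᵢₙ, T₀ₘₐₓ] such that F(T₀) + 1 < 0 and G(T₀) < 1. -/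
noncomputable section

open Real

/-- **Lemma 1.** If the initial energy `E₀` is sufficiently negative, then the blow-up
conditions `F(T₀) + 1 < 0` and `G(T₀) < 1` hold for some `T₀ ∈ [T₀min, T₀max]`. -/
theorem blowup_conditions_of_negative_energy
    {N : ℕ} (hN : 3 ≤ N) {γ κ g₁ g₂ g : ℝ}
    (hγ : 0 < γ) (hκ : 0 < κ) (hg₁ : 0 < g₁) (hg₂ : 0 < g₂)
    (hg : -Real.sqrt (g₁ * g₂) < g)
    (X₀ Y₀ S₀₀ E₀ : ℝ) (hX₀ : 0 ≤ X₀) (hS₀₀ : 0 ≤ S₀₀)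
    (c₁ c₂ c₃ β C₀ Tmax Tmin : ℝ) (Mt F M G : ℝ → ℝ)
    (hc₁ : c₁ = 4 * γ * κ + 4 * γ ^ 2 * (5 * (N : ℝ) + 6) / ((N : ℝ) - 2))
    (hc₂ : c₂ = if 0 ≤ g then (4 / 5) * min 1 (min g₁ g₂)
      else (4 / 5) * min 1 (min (g₁ + g * Real.sqrt g₁ / Real.sqrt g₂)
        (g₂ + g * Real.sqrt g₂ / Real.sqrt g₁)))
    (hc₃ : c₃ = (32 * (N : ℝ) / ((N : ℝ) + 2)) * max 1 (max g₁ g₂))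
    (hC₀ : C₀ = |Y₀| / (2 * γ) + 4 * κ * S₀₀ / γ ^ 2)
    (hβ : β = c₃ * γ / c₂)
    (hMt : ∀ t, Mt t = 1 + X₀ + C₀ * (Real.exp (2 * γ * t) - 1))
    (hTmax : Tmax = (1 / β) * Real.log (1 + β ^ 2 / ((1 + X₀) * (β ^ 2 + c₁))))
    (hTmin : Tmin = (1 / β) * Real.log (1 + β ^ 2 / (Mt Tmax * (β ^ 2 + c₁))))
    (hF : ∀ t, F t = X₀ + Y₀ * t + (8 * (N : ℝ) / ((N : ℝ) + 2)) * E₀ * t ^ 2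
      + (4 * κ / γ ^ 2) * S₀₀ * (Real.exp (2 * γ * t) - 2 * γ * t - 1))
    (hM : ∀ t, M t = sSup (F '' Set.Icc 0 t) + 1)
    (hG : ∀ t, G t = M t * (c₁ * t ^ 2 / 2 + Real.exp (c₃ * γ * t / c₂) - 1))
    (hE₀ : E₀ < -(((N : ℝ) + 2) * Mt Tmax) / (8 * (N : ℝ) * Tmin ^ 2)) :
    ∃ T₀ ∈ Set.Icc Tmin Tmax, F T₀ + 1 < 0 ∧ G T₀ < 1 := by
  have hN' : (3:ℝ) ≤ (N:ℝ) := by exact_mod_cast hN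
  have hN2 : 0 < (N:ℝ) - 2 := by linarith
  have hN0 : 0 < (N:ℝ) := by linarith
  have hc1 : 0 < c₁ := by rw [hc₁]; positivity
  have hc3 : 0 < c₃ := by rw [hc₃]; positivity
  have hs1 : 0 < Real.sqrt g₁ := Real.sqrt_pos.2 hg₁
  have hs2 : 0 < Real.sqrt g₂ := Real.sqrt_pos.2 hg₂
  have hc2 : 0 < c₂ := by
    rw [Real.sqrt_mul hg₁.le] at hg
    have e1 : g₁ + g * Real.sqrt g₁ / Real.sqrt g₂
        = Real.sqrt g₁ * (Real.sqrt g₁ * Real.sqrt g₂ + g) / Real.sqrt g₂ := by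
      field_simp
      linear_combination (-Real.sqrt g₂) * Real.mul_self_sqrt hg₁.le
    have e2 : g₂ + g * Real.sqrt g₂ / Real.sqrt g₁
        = Real.sqrt g₂ * (Real.sqrt g₁ * Real.sqrt g₂ + g) / Real.sqrt g₁ := by
      field_simp
      linear_combination (-Real.sqrt g₁) * Real.mul_self_sqrt hg₂.le
    have hp : 0 < Real.sqrt g₁ * Real.sqrt g₂ + g := by linarith
    rw [hc₂]
    split_ifs
    · positivity
    · rw [e1, e2]
      exact mul_pos (by norm_num) (lt_min one_pos (lt_min (by positivity) (by positivity)))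
  have hb : 0 < β := by rw [hβ]; positivity
  have hC : 0 ≤ C₀ := by rw [hC₀]; positivity
  have hTmax0 : 0 < Tmax := by
    rw [hTmax]
    have : 0 < β ^ 2 / ((1 + X₀) * (β ^ 2 + c₁)) := by positivity
    exact mul_pos (by positivity) (Real.log_pos (by linarith))
  have hmono : ∀ s t, s ≤ t → Mt s ≤ Mt t := by
    intro s t hst
    rw [hMt, hMt]
    gcongr
  have hMge : 1 + X₀ ≤ Mt Tmax := by
    have h0 := hmono 0 Tmax hTmax0.le
    have h1 : Mt 0 = 1 + X₀ := by rw [hMt]; simp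
    linarith
  have hMpos : 0 < Mt Tmax := by linarith
  have hq : 0 < β ^ 2 / (Mt Tmax * (β ^ 2 + c₁)) := by positivity
  have hTmin0 : 0 < Tmin := by
    rw [hTmin]
    exact mul_pos (by positivity) (Real.log_pos (by linarith))
  have hle : Tmin ≤ Tmax := by
    rw [hTmin]
    nth_rw 2 [hTmax]
    gcongr
  have hexp : Real.exp (β * Tmin) = 1 + β ^ 2 / (Mt Tmax * (β ^ 2 + c₁)) := by
    have : β * Tmin = Real.log (1 + β ^ 2 / (Mt Tmax * (β ^ 2 + c₁))) := by
      nth_rw 1 [hTmin]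
      field_simp
    rw [this, Real.exp_log (by linarith)]
  have hA : 0 < 8 * (N:ℝ) / ((N:ℝ) + 2) := by positivity
  have hE : (8 * (N:ℝ) / ((N:ℝ) + 2)) * E₀ * Tmin ^ 2 < - Mt Tmax := by
    rw [lt_div_iff₀ (by positivity)] at hE₀
    have : (8 * (N:ℝ) / ((N:ℝ) + 2)) * E₀ * Tmin ^ 2
        = (E₀ * (8 * (N:ℝ) * Tmin ^ 2)) / ((N:ℝ) + 2) := by ring
    rw [this, div_lt_iff₀ (by positivity)]
    linarith
  have hEneg : (8 * (N:ℝ) / ((N:ℝ) + 2)) * E₀ ≤ 0 := by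
    by_contra h
    push Not at h
    have : 0 < (8 * (N:ℝ) / ((N:ℝ) + 2)) * E₀ * Tmin ^ 2 := by positivity
    linarith
  have hFle : ∀ t, 0 ≤ t → F t + 1 ≤ Mt t + (8 * (N:ℝ) / ((N:ℝ) + 2)) * E₀ * t ^ 2 := by
    intro t ht
    rw [hF, hMt, hC₀]
    have h1 := Real.add_one_le_exp (2 * γ * t)
    have h2 : Y₀ * t ≤ |Y₀| / (2 * γ) * (Real.exp (2 * γ * t) - 1) := by
      calc Y₀ * t ≤ |Y₀| * t := by gcongr; exact le_abs_self _
        _ = |Y₀| / (2 * γ) * (2 * γ * t) := by field_simp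
        _ ≤ _ := by gcongr; linarith
    have h3 : (4 * κ / γ ^ 2) * S₀₀ * (Real.exp (2 * γ * t) - 2 * γ * t - 1)
        ≤ 4 * κ * S₀₀ / γ ^ 2 * (Real.exp (2 * γ * t) - 1) := by
      have e : (4 * κ / γ ^ 2) * S₀₀ = 4 * κ * S₀₀ / γ ^ 2 := by ring
      rw [e]
      have : 0 ≤ 2 * γ * t := by positivity
      gcongr
      linarith
    linarith
  refine ⟨Tmin, ⟨le_rfl, hle⟩, ?_, ?_⟩
  · have h1 := hFle Tmin hTmin0.le
    have h2 := hmono _ _ hle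
    linarith
  · have hMle : M Tmin ≤ Mt Tmax := by
      rw [hM]
      have : sSup (F '' Set.Icc 0 Tmin) ≤ Mt Tmax - 1 := by
        apply csSup_le ((Set.nonempty_Icc.2 hTmin0.le).image F)
        rintro _ ⟨t, ⟨ht0, ht1⟩, rfl⟩
        have h1 := hFle t ht0
        have h2 := hmono _ _ (ht1.trans hle)
        have h3 := mul_nonpos_of_nonpos_of_nonneg hEneg (sq_nonneg t)
        linarith
      linarith
    have e : c₃ * γ * Tmin / c₂ = β * Tmin := by rw [hβ]; ring
    rw [hG, e]
    have hx : 0 < β * Tmin := by positivity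
    have h1 := Real.quadratic_le_exp_of_nonneg hx.le
    have h2 : Tmin ^ 2 / 2 < (Real.exp (β * Tmin) - 1) / β ^ 2 := by
      rw [lt_div_iff₀ (by positivity)]
      linarith
    have h3 : c₁ * Tmin ^ 2 / 2 + Real.exp (β * Tmin) - 1 < 1 / Mt Tmax := by
      have h4 : c₁ * (Tmin ^ 2 / 2) < c₁ * ((Real.exp (β * Tmin) - 1) / β ^ 2) := by gcongr
      have h5 : c₁ * ((Real.exp (β * Tmin) - 1) / β ^ 2) + (Real.exp (β * Tmin) - 1)
          = 1 / Mt Tmax := by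
        rw [hexp]
        field_simp
        ring
      linarith
    have h6 : 0 ≤ c₁ * Tmin ^ 2 / 2 + Real.exp (β * Tmin) - 1 := by
      have : 0 ≤ c₁ * Tmin ^ 2 / 2 := by positivity
      nlinarith [sq_nonneg (β * Tmin)]
    calc _ ≤ Mt Tmax * (c₁ * Tmin ^ 2 / 2 + Real.exp (β * Tmin) - 1) := by gcongr
      _ < Mt Tmax * (1 / Mt Tmax) := by gcongr
      _ = 1 := by field_simp
end
end

section
/- Let N ≥ 3, γ > 0, κ > 0, g₁ > 0, g₂ > 0, g > −√(g₁g₂), and let X₀ ≥ 0, Y₀, S₀₀ ≥ 0, E₀ be real numbers playing the roles of X(0), Y(0), S₀(0), E(0). Set β = c₃γ/c₂, C₀ = 4N|E₀|/((N+2)γ²) + 4κS₀₀/γ², M̃(t) = 1 + X₀ + C₀(e^{2γt} − 1), T₀ₘₐₓ = (1/β)ln(1 + β²/((1+X₀)(β² + c₁))), and T₀ₘᵢₙ = (1/β)ln(1 + β²/(M̃(T₀ₘₐₓ)(β² + c₁))). If Y₀ < 8κS₀₀/γ − M̃(T₀ₘₐₓ)/T₀ₘᵢₙ, then there exists T₀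 ∈ [T₀ₘᵢₙ, T₀ₘₐₓ] such that F(T₀) + 1 < 0 and G(T₀) < 1. -/
noncomputable section

open Real

set_option maxHeartbeats 1000000 in
/-- **Lemma 2.** If `Y₀` is sufficiently negative, then the blow-up conditions
`F(T₀) + 1 < 0` and `G(T₀) < 1` hold for some `T₀ ∈ [T₀min, T₀max]`. -/
theorem blowup_conditions_of_negative_Y
    {N : ℕ} (hN : 3 ≤ N) {γ κ g₁ g₂ g : ℝ}
    (hγ : 0 < γ) (hκ : 0 < κ) (hg₁ : 0 < g₁) (hg₂ : 0 < g₂)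
    (hg : -Real.sqrt (g₁ * g₂) < g)
    (X₀ Y₀ S₀₀ E₀ : ℝ) (hX₀ : 0 ≤ X₀) (hS₀₀ : 0 ≤ S₀₀)
    (c₁ c₂ c₃ β C₀ Tmax Tmin : ℝ) (Mt F M G : ℝ → ℝ)
    (hc₁ : c₁ = 4 * γ * κ + 4 * γ ^ 2 * (5 * (N : ℝ) + 6) / ((N : ℝ) - 2))
    (hc₂ : c₂ = if 0 ≤ g then (4 / 5) * min 1 (min g₁ g₂)
      else (4 / 5) * min 1 (min (g₁ + g * Real.sqrt g₁ / Real.sqrt g₂)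
        (g₂ + g * Real.sqrt g₂ / Real.sqrt g₁)))
    (hc₃ : c₃ = (32 * (N : ℝ) / ((N : ℝ) + 2)) * max 1 (max g₁ g₂))
    (hC₀ : C₀ = 4 * (N : ℝ) * |E₀| / (((N : ℝ) + 2) * γ ^ 2) + 4 * κ * S₀₀ / γ ^ 2)
    (hβ : β = c₃ * γ / c₂)
    (hMt : ∀ t, Mt t = 1 + X₀ + C₀ * (Real.exp (2 * γ * t) - 1))
    (hTmax : Tmax = (1 / β) * Real.log (1 + β ^ 2 / ((1 + X₀) * (β ^ 2 + c₁))))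
    (hTmin : Tmin = (1 / β) * Real.log (1 + β ^ 2 / (Mt Tmax * (β ^ 2 + c₁))))
    (hF : ∀ t, F t = X₀ + Y₀ * t + (8 * (N : ℝ) / ((N : ℝ) + 2)) * E₀ * t ^ 2
      + (4 * κ / γ ^ 2) * S₀₀ * (Real.exp (2 * γ * t) - 2 * γ * t - 1))
    (hM : ∀ t, M t = sSup (F '' Set.Icc 0 t) + 1)
    (hG : ∀ t, G t = M t * (c₁ * t ^ 2 / 2 + Real.exp (c₃ * γ * t / c₂) - 1))
    (hY₀ : Y₀ < 8 * κ * S₀₀ / γ - Mt Tmax / Tmin) :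
    ∃ T₀ ∈ Set.Icc Tmin Tmax, F T₀ + 1 < 0 ∧ G T₀ < 1 := by
  have hNr : (3 : ℝ) ≤ (N : ℝ) := by exact_mod_cast hN
  have hN2 : (0 : ℝ) < (N : ℝ) - 2 := by linarith
  have hc₁p : 0 < c₁ := by rw [hc₁]; positivity
  have hc₃p : 0 < c₃ := by
    rw [hc₃]
    have : (0 : ℝ) < max 1 (max g₁ g₂) := lt_of_lt_of_le one_pos (le_max_left _ _)
    positivity
  have hc₂p : 0 < c₂ := by
    rw [hc₂]
    have h1 := Real.sqrt_pos.2 hg₁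
    have h2 := Real.sqrt_pos.2 hg₂
    have q1 := Real.mul_self_sqrt hg₁.le
    have q2 := Real.mul_self_sqrt hg₂.le
    rw [Real.sqrt_mul hg₁.le] at hg
    split_ifs with h
    · have : 0 < min 1 (min g₁ g₂) := lt_min one_pos (lt_min hg₁ hg₂)
      positivity
    · have a1 : 0 < g₁ + g * Real.sqrt g₁ / Real.sqrt g₂ := by
        have e : g₁ + g * Real.sqrt g₁ / Real.sqrt g₂
            = Real.sqrt g₁ * (Real.sqrt g₁ * Real.sqrt g₂ + g) / Real.sqrt g₂ := by
          rw [eq_div_iff h2.ne', add_mul, div_mul_cancel₀ _ h2.ne', mul_add, ← mul_assoc, q1]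
          ring
        rw [e]
        have : 0 < Real.sqrt g₁ * Real.sqrt g₂ + g := by linarith
        positivity
      have a2 : 0 < g₂ + g * Real.sqrt g₂ / Real.sqrt g₁ := by
        have e : g₂ + g * Real.sqrt g₂ / Real.sqrt g₁
            = Real.sqrt g₂ * (Real.sqrt g₂ * Real.sqrt g₁ + g) / Real.sqrt g₁ := by
          rw [eq_div_iff h1.ne', add_mul, div_mul_cancel₀ _ h1.ne', mul_add, ← mul_assoc, q2]
          ring
        rw [e]
        have : 0 < Real.sqrt g₂ * Real.sqrt g₁ + g := by linarith
        positivity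
      have := lt_min one_pos (lt_min a1 a2)
      positivity
  have hβp : 0 < β := by rw [hβ]; positivity
  have hC₀p : 0 ≤ C₀ := by rw [hC₀]; positivity
  have hTmaxp : 0 ≤ Tmax := by
    rw [hTmax]
    have : 0 ≤ Real.log (1 + β ^ 2 / ((1 + X₀) * (β ^ 2 + c₁))) :=
      Real.log_nonneg (le_add_of_nonneg_right (by positivity))
    positivity
  have hMono : ∀ s t, s ≤ t → Mt s ≤ Mt t := by
    intro s t h
    rw [hMt, hMt]
    gcongr
  have hm1 : 1 + X₀ ≤ Mt Tmax := by
    have := hMono 0 Tmax hTmaxp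
    rw [hMt 0] at this
    simpa using this
  set m := Mt Tmax with hm
  have hmp : 0 < m := by linarith
  have hxp : 0 < β ^ 2 / (m * (β ^ 2 + c₁)) := by positivity
  have hTminp : 0 < Tmin := by
    rw [hTmin]
    have : 0 < Real.log (1 + β ^ 2 / (m * (β ^ 2 + c₁))) := Real.log_pos (by linarith)
    positivity
  have hle : Tmin ≤ Tmax := by
    rw [hTmin, hTmax]
    gcongr
  have hexp : Real.exp (β * Tmin) = 1 + β ^ 2 / (m * (β ^ 2 + c₁)) := by
    rw [hTmin, ← mul_assoc, mul_one_div_cancel hβp.ne', one_mul, Real.exp_log (by linarith)]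
  -- bound on F
  have hFb : ∀ t, 0 ≤ t → F t + 1 ≤ Mt t - m / Tmin * t := by
    intro t ht
    have hq := Real.quadratic_le_exp_of_nonneg (x := 2 * γ * t) (by positivity)
    have ht2 : 2 * γ ^ 2 * t ^ 2 ≤ Real.exp (2 * γ * t) - 1 := by
      have : 0 ≤ 2 * γ * t := by positivity
      nlinarith
    have hE : (8 * (N : ℝ) / ((N : ℝ) + 2)) * E₀ * t ^ 2
        ≤ 4 * (N : ℝ) * |E₀| / (((N : ℝ) + 2) * γ ^ 2) * (Real.exp (2 * γ * t) - 1) := by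
      calc (8 * (N : ℝ) / ((N : ℝ) + 2)) * E₀ * t ^ 2
          ≤ (8 * (N : ℝ) / ((N : ℝ) + 2)) * |E₀| * t ^ 2 := by
            gcongr
            exact le_abs_self _
        _ = 4 * (N : ℝ) * |E₀| / (((N : ℝ) + 2) * γ ^ 2) * (2 * γ ^ 2 * t ^ 2) := by
            field_simp
            ring
        _ ≤ _ := by gcongr
    have hS : (4 * κ / γ ^ 2) * S₀₀ * (Real.exp (2 * γ * t) - 2 * γ * t - 1)
        = 4 * κ * S₀₀ / γ ^ 2 * (Real.exp (2 * γ * t) - 1) - 8 * κ * S₀₀ / γ * t := by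
      field_simp
      ring
    have hY := mul_le_mul_of_nonneg_right hY₀.le ht
    rw [hF, hMt, hC₀, hS]
    linarith
  have hF0 : F 0 = X₀ := by rw [hF]; simp
  have hFs : F Tmin + 1 < 0 := by
    have hY : 0 < ((8 * κ * S₀₀ / γ - m / Tmin) - Y₀) * Tmin := mul_pos (by linarith) hTminp
    have h1 := hFb Tmin hTminp.le
    have h2 := hMono _ _ hle
    have hq := Real.quadratic_le_exp_of_nonneg (x := 2 * γ * Tmin) (by positivity)
    have ht2 : 2 * γ ^ 2 * Tmin ^ 2 ≤ Real.exp (2 * γ * Tmin) - 1 := by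
      have : 0 ≤ 2 * γ * Tmin := by positivity
      nlinarith
    have hE : (8 * (N : ℝ) / ((N : ℝ) + 2)) * E₀ * Tmin ^ 2
        ≤ 4 * (N : ℝ) * |E₀| / (((N : ℝ) + 2) * γ ^ 2) * (Real.exp (2 * γ * Tmin) - 1) := by
      calc (8 * (N : ℝ) / ((N : ℝ) + 2)) * E₀ * Tmin ^ 2
          ≤ (8 * (N : ℝ) / ((N : ℝ) + 2)) * |E₀| * Tmin ^ 2 := by
            gcongr
            exact le_abs_self _
        _ = 4 * (N : ℝ) * |E₀| / (((N : ℝ) + 2) * γ ^ 2) * (2 * γ ^ 2 * Tmin ^ 2) := by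
            field_simp
            ring
        _ ≤ _ := by gcongr
    have hS : (4 * κ / γ ^ 2) * S₀₀ * (Real.exp (2 * γ * Tmin) - 2 * γ * Tmin - 1)
        = 4 * κ * S₀₀ / γ ^ 2 * (Real.exp (2 * γ * Tmin) - 1) - 8 * κ * S₀₀ / γ * Tmin := by
      field_simp
      ring
    have hd : m / Tmin * Tmin = m := div_mul_cancel₀ _ hTminp.ne'
    have h3 : 1 + X₀ + C₀ * (Real.exp (2 * γ * Tmin) - 1) ≤ m := by
      rw [← hMt]; exact h2
    rw [hC₀] at h3
    rw [hF, hS]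
    linarith
  refine ⟨Tmin, ⟨le_rfl, hle⟩, hFs, ?_⟩
  have hMle : M Tmin ≤ m := by
    rw [hM]
    have : sSup (F '' Set.Icc 0 Tmin) ≤ m - 1 := by
      apply csSup_le
      · exact ⟨F 0, 0, ⟨le_rfl, hTminp.le⟩, rfl⟩
      · rintro _ ⟨t, ⟨ht0, ht1⟩, rfl⟩
        have h1 := hFb t ht0
        have h2 := hMono t Tmax (ht1.trans hle)
        have h3 : 0 ≤ m / Tmin * t := by positivity
        linarith
    linarith
  have he : c₃ * γ * Tmin / c₂ = β * Tmin := by rw [hβ]; ring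
  rw [hG, he]
  have hsp : 0 < β * Tmin := by positivity
  have hq := Real.quadratic_le_exp_of_nonneg hsp.le
  have hT2 : Tmin ^ 2 / 2 < 1 / (m * (β ^ 2 + c₁)) := by
    have h1 : β ^ 2 * (Tmin ^ 2 / 2) < β ^ 2 * (1 / (m * (β ^ 2 + c₁))) := by
      rw [mul_one_div]
      have e : β ^ 2 * (Tmin ^ 2 / 2) = (β * Tmin) ^ 2 / 2 := by ring
      rw [e]
      linarith
    exact lt_of_mul_lt_mul_left h1 (by positivity)
  have hB : c₁ * Tmin ^ 2 / 2 + Real.exp (β * Tmin) - 1 < 1 / m := by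
    have h1 := mul_lt_mul_of_pos_left hT2 hc₁p
    have h2 : c₁ * (1 / (m * (β ^ 2 + c₁))) + β ^ 2 / (m * (β ^ 2 + c₁)) = 1 / m := by
      have : β ^ 2 + c₁ ≠ 0 := by positivity
      field_simp
      ring
    rw [hexp]
    linarith
  have hB0 : 0 ≤ c₁ * Tmin ^ 2 / 2 + Real.exp (β * Tmin) - 1 := by
    have : 0 ≤ c₁ * Tmin ^ 2 / 2 := by positivity
    rw [hexp]
    linarith
  calc M Tmin * (c₁ * Tmin ^ 2 / 2 + Real.exp (β * Tmin) - 1)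
      ≤ m * (c₁ * Tmin ^ 2 / 2 + Real.exp (β * Tmin) - 1) :=
        mul_le_mul_of_nonneg_right hMle hB0
    _ < m * (1 / m) := mul_lt_mul_of_pos_left hB hmp
    _ = 1 := mul_one_div_cancel hmp.ne'
end
end

section
/- Let κ > γ > 0, g₁ = g₂, set ω = √(κ² − γ²), and let α ∈ [0, π/2) be defined by e^{iα} = κ/(ω − iγ). If U is a complex-valued function of (t,x), smooth in t with U(t,·) Schwartz in x, solving the single NLS equation i∂ₜU = −ΔU + ωU − (g + g₁)|U|²U, then the pair u = e^{iα/2}U, v = e^{−iα/2}U is a solution of the coupled PT-symmetric NLS system (so in particular both components have equal L² norms: ‖u(t)‖₂² = ‖v(t)‖₂² for all t). -/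
noncomputable section

open MeasureTheory Complex Real

abbrev Space (N : ℕ) := EuclideanSpace ℝ (Fin N)

/-- Partial derivative of `f` in the `i`-th coordinate direction. -/
def pD {N : ℕ} (f : Space N → ℂ) (i : Fin N) (x : Space N) : ℂ :=
  fderiv ℝ f x (EuclideanSpace.single i 1)

/-- Laplacian of `f`. -/
def lap {N : ℕ} (f : Space N → ℂ) (x : Space N) : ℂ :=
  ∑ i, fderiv ℝ (fun y => pD f i y) x (EuclideanSpace.single i 1)

/-- Squared modulus of the gradient of `f`. -/
def gradSq {N : ℕ} (f : Space N → ℂ) (x : Space N) : ℝ :=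
  ∑ i, ‖pD f i x‖ ^ 2

/-- `x·∇f`. -/
def xGrad {N : ℕ} (f : Space N → ℂ) (x : Space N) : ℂ :=
  ∑ i, (x i : ℂ) * pD f i x

/-- A solution of the coupled PT-symmetric NLS system on the time interval `[0, T]`. -/
structure IsSolution (N : ℕ) (γ κ g₁ g₂ g T : ℝ)
    (u v : ℝ → Space N → ℂ) : Prop where
  smooth_u : ∀ x, ContDiff ℝ (⊤ : ℕ∞) fun t => u t x
  smooth_v : ∀ x, ContDiff ℝ (⊤ : ℕ∞) fun t => v t x
  schwartz_u : ∀ t, ∃ f : SchwartzMap (Space N) ℂ, ∀ x, u t x = f x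
  schwartz_v : ∀ t, ∃ f : SchwartzMap (Space N) ℂ, ∀ x, v t x = f x
  eq_u : ∀ t ∈ Set.Icc (0 : ℝ) T, ∀ x,
    Complex.I * deriv (fun s => u s x) t =
      - lap (u t) x + Complex.I * (γ : ℂ) * u t x + (κ : ℂ) * v t x
        - ((g₁ : ℂ) * (‖u t x‖ : ℂ) ^ 2 + (g : ℂ) * (‖v t x‖ : ℂ) ^ 2) * u t x
  eq_v : ∀ t ∈ Set.Icc (0 : ℝ) T, ∀ x,
    Complex.I * deriv (fun s => v s x) t =
      - lap (v t) x - Complex.I * (γ : ℂ) * v t x + (κ : ℂ) * u t x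
        - ((g : ℂ) * (‖u t x‖ : ℂ) ^ 2 + (g₂ : ℂ) * (‖v t x‖ : ℂ) ^ 2) * v t x

/-- Stokes component `S₀`. -/
def S0 {N : ℕ} (u v : ℝ → Space N → ℂ) (t : ℝ) : ℝ :=
  ∫ x, (‖u t x‖ ^ 2 + ‖v t x‖ ^ 2)

/-- Stokes component `S₁`. -/
def S1 {N : ℕ} (u v : ℝ → Space N → ℂ) (t : ℝ) : ℝ :=
  2 * (∫ x, u t x * (starRingEnd ℂ) (v t x)).re

/-- Stokes component `S₂`. -/
def S2 {N : ℕ} (u v : ℝ → Space N → ℂ) (t : ℝ) : ℝ :=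
  2 * (∫ x, u t x * (starRingEnd ℂ) (v t x)).im

/-- Stokes component `S₃`. -/
def S3 {N : ℕ} (u v : ℝ → Space N → ℂ) (t : ℝ) : ℝ :=
  ∫ x, (‖u t x‖ ^ 2 - ‖v t x‖ ^ 2)

/-- The energy `E(t)`. -/
def energy {N : ℕ} (κ g₁ g₂ g : ℝ) (u v : ℝ → Space N → ℂ) (t : ℝ) : ℝ :=
  ∫ x, (gradSq (u t) x + gradSq (v t) x
    + κ * (u t x * (starRingEnd ℂ) (v t x) + (starRingEnd ℂ) (u t x) * v t x).re
    - g₁ / 2 * ‖u t x‖ ^ 4 - g₂ / 2 * ‖v t x‖ ^ 4 - g * ‖u t x‖ ^ 2 * ‖v t x‖ ^ 2)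

/-- The mean squared width `X(t)`. -/
def Xvar {N : ℕ} (u v : ℝ → Space N → ℂ) (t : ℝ) : ℝ :=
  ∫ x, ‖x‖ ^ 2 * (‖u t x‖ ^ 2 + ‖v t x‖ ^ 2)

/-- A solution of the coupled PT-symmetric NLS system for all times `t ∈ ℝ`. -/
structure IsSolutionAll (N : ℕ) (γ κ g₁ g₂ g : ℝ)
    (u v : ℝ → Space N → ℂ) : Prop where
  smooth_u : ∀ x, ContDiff ℝ (⊤ : ℕ∞) fun t => u t x
  smooth_v : ∀ x, ContDiff ℝ (⊤ : ℕ∞) fun t => v t x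
  schwartz_u : ∀ t, ∃ f : SchwartzMap (Space N) ℂ, ∀ x, u t x = f x
  schwartz_v : ∀ t, ∃ f : SchwartzMap (Space N) ℂ, ∀ x, v t x = f x
  eq_u : ∀ t, ∀ x,
    Complex.I * deriv (fun s => u s x) t =
      - lap (u t) x + Complex.I * (γ : ℂ) * u t x + (κ : ℂ) * v t x
        - ((g₁ : ℂ) * (‖u t x‖ : ℂ) ^ 2 + (g : ℂ) * (‖v t x‖ : ℂ) ^ 2) * u t x
  eq_v : ∀ t, ∀ x,
    Complex.I * deriv (fun s => v s x) t =
      - lap (v t) x - Complex.I * (γ : ℂ) * v t x + (κ : ℂ) * u t x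
        - ((g : ℂ) * (‖u t x‖ : ℂ) ^ 2 + (g₂ : ℂ) * (‖v t x‖ : ℂ) ^ 2) * v t x

/-- The Laplacian commutes with multiplication by a constant. -/
theorem lap_const_mul {N : ℕ} (c : ℂ) (f : Space N → ℂ) (x : Space N) :
    lap (fun y => c * f y) x = c * lap f x := by
  have key : ∀ (h : Space N → ℂ) (y e : Space N),
      fderiv ℝ (fun z => c * h z) y e = c * fderiv ℝ h y e := by
    intro h y e
    have := congrArg (fun L : Space N → (Space N →L[ℝ] ℂ) => L y e)
      (fderiv_const_smul_field (𝕜 := ℝ) (f := h) c)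
    simpa [Pi.smul_def] using this
  have hp : ∀ i, (fun y => pD (fun y => c * f y) i y) = fun y => c * pD f i y := by
    intro i
    funext y
    exact key f y _
  unfold lap
  rw [Finset.mul_sum]
  refine Finset.sum_congr rfl fun i _ => ?_
  rw [hp i, key]

/-- A solution of the single NLS equation `i∂ₜU = -ΔU + ωU - (g + g₁)|U|²U` produces a
solution `(e^{iα/2}U, e^{-iα/2}U)` of the coupled PT-symmetric NLS system, with both
components having equal `L²` norms. -/
theorem single_NLS_solution
    {N : ℕ} {γ κ g₁ g₂ g ω α : ℝ}
    (hγ : 0 < γ) (hκγ : γ < κ) (h₁₂ : g₁ = g₂)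
    (hω : ω = Real.sqrt (κ ^ 2 - γ ^ 2))
    (hα : α ∈ Set.Ico 0 (Real.pi / 2))
    (hexp : Complex.exp (Complex.I * (α : ℂ)) = (κ : ℂ) / ((ω : ℂ) - Complex.I * (γ : ℂ)))
    (U : ℝ → Space N → ℂ)
    (hUsmooth : ∀ x, ContDiff ℝ (⊤ : ℕ∞) fun t => U t x)
    (hUschwartz : ∀ t, ∃ f : SchwartzMap (Space N) ℂ, ∀ x, U t x = f x)
    (hU : ∀ t, ∀ x, Complex.I * deriv (fun s => U s x) t =
      - lap (U t) x + (ω : ℂ) * U t x - ((g : ℂ) + (g₁ : ℂ)) * (‖U t x‖ : ℂ) ^ 2 * U t x) :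
    IsSolutionAll N γ κ g₁ g₂ g
      (fun t x => Complex.exp (Complex.I * (α : ℂ) / 2) * U t x)
      (fun t x => Complex.exp (-(Complex.I * (α : ℂ) / 2)) * U t x) ∧
    ∀ t : ℝ, (∫ x, ‖Complex.exp (Complex.I * (α : ℂ) / 2) * U t x‖ ^ 2) =
      ∫ x, ‖Complex.exp (-(Complex.I * (α : ℂ) / 2)) * U t x‖ ^ 2 := by
  subst h₁₂
  have hsq : ω ^ 2 = κ ^ 2 - γ ^ 2 := by
    rw [hω, Real.sq_sqrt]
    nlinarith
  have hκ0 : (κ : ℂ) ≠ 0 := by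
    exact_mod_cast (hγ.trans hκγ).ne'
  have hsqC : (ω : ℂ) ^ 2 = (κ : ℂ) ^ 2 - (γ : ℂ) ^ 2 := by exact_mod_cast hsq
  have hprod : ((ω : ℂ) - I * γ) * ((ω : ℂ) + I * γ) = (κ : ℂ) ^ 2 := by
    linear_combination hsqC - (γ : ℂ) ^ 2 * I_sq
  have hden : (ω : ℂ) - I * γ ≠ 0 := by
    intro h
    rw [h, zero_mul] at hprod
    exact pow_ne_zero 2 hκ0 hprod.symm
  have hna : ‖Complex.exp (I * (α : ℂ) / 2)‖ = 1 := by
    rw [Complex.norm_exp]; simp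
  have hnb : ‖Complex.exp (-(I * (α : ℂ) / 2))‖ = 1 := by
    rw [Complex.norm_exp]; simp
  have hab : Complex.exp (I * (α : ℂ) / 2) * Complex.exp (-(I * (α : ℂ) / 2)) = 1 := by
    rw [← Complex.exp_add]; simp
  have haa : Complex.exp (I * (α : ℂ) / 2) * Complex.exp (I * (α : ℂ) / 2)
      = (κ : ℂ) / ((ω : ℂ) - I * γ) := by
    rw [← Complex.exp_add, add_halves, hexp]
  generalize Complex.exp (I * (α : ℂ) / 2) = a at *
  generalize Complex.exp (-(I * (α : ℂ) / 2)) = b at *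
  rw [eq_div_iff hden] at haa
  have h1 : (κ : ℂ) * b = (ω - I * γ) * a := by
    linear_combination (-b) * haa + a * (ω - I * γ) * hab
  have h2 : (κ : ℂ) * a = (ω + I * γ) * b := by
    apply mul_left_cancel₀ hκ0
    linear_combination (-(ω + I * γ)) * h1 - a * hprod
  have hS : ∀ c : ℂ, ∀ t, ∃ f : SchwartzMap (Space N) ℂ, ∀ x, c * U t x = f x := by
    intro c t
    obtain ⟨f, hf⟩ := hUschwartz t
    exact ⟨c • f, fun x => by simp [hf x]⟩
  have hd : ∀ (c : ℂ) t x, deriv (fun s => c * U s x) t = c * deriv (fun s => U s x) t := by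
    intro c t x
    exact deriv_const_mul_field c
  refine ⟨⟨fun x => contDiff_const.mul (hUsmooth x), fun x => contDiff_const.mul (hUsmooth x),
    hS a, hS b, fun t x => ?_, fun t x => ?_⟩, fun t => by simp only [norm_mul, hna, hnb]⟩
  · rw [hd, lap_const_mul]
    simp only [norm_mul, hna, hnb, one_mul]
    linear_combination a * hU t x - U t x * h1
  · rw [hd, lap_const_mul]
    simp only [norm_mul, hna, hnb, one_mul]
    linear_combination b * hU t x - U t x * h2
end
end
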